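/- Let Y be a subspace of X. Then Y has property-USNP if and only if for every f ∈ Y*, every x ∈ X \ Y, and all ρ, μ ∈ 𝒫 with χ_ρ^Y(f) < ∞ and χ_μ^Y(f) < ∞, one has sup_{v∈Y}[f(v) − χ_ρ^Y(f)·ρ(v+x)] = inf_{w∈Y}[−f(w) + χ_μ^Y(f)·μ(w−x)]. -/

import Mathlib

open scoped ENNReal

noncomputable section

/-- `χ_ρ(g) = sup { |g v| : ρ v ≤ 1 } ∈ [0,∞]`. -/
def chi {V : Type*} [AddCommGroup V] [Module ℝ V] [TopologicalSpace V]
    (ρ : V → ℝ) (g : V →L[ℝ] ℝ) : ℝ≥0∞ :=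
  ⨆ v ∈ {v : V | ρ v ≤ 1}, ENNReal.ofReal |g v|

/-- `χ_ρ^W(f)` for a functional `f` on a subspace `W`. -/
def chiSub {V : Type*} [AddCommGroup V] [Module ℝ V] [TopologicalSpace V]
    (W : Submodule ℝ V) (ρ : V → ℝ) (f : W →L[ℝ] ℝ) : ℝ≥0∞ :=
  chi (fun w : W => ρ (w : V)) f

/-- `ft` is a Hahn-Banach extension of the pair `(f, ρ)` on the subspace `W`. -/
def IsHBE {V : Type*} [AddCommGroup V] [Module ℝ V] [TopologicalSpace V]
    (W : Submodule ℝ V) (ρ : V → ℝ) (f : W →L[ℝ] ℝ) (ft : V →L[ℝ] ℝ) : Prop :=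
  ft.comp W.subtypeL = f ∧ chi ρ ft = chiSub W ρ f

/-- Property-USNP of a subspace `W` with respect to the family `p` of seminorms. -/
def USNP {V : Type*} [AddCommGroup V] [Module ℝ V] [TopologicalSpace V]
    {ι : Type*} (p : ι → V → ℝ) (W : Submodule ℝ V) : Prop :=
  ∀ f : W →L[ℝ] ℝ, ∃ ft : V →L[ℝ] ℝ, ∀ i, chiSub W (p i) f < ⊤ →
    IsHBE W (p i) f ft ∧ ∀ g : V →L[ℝ] ℝ, IsHBE W (p i) f g → g = ft

section helpers

variable {V : Type*} [AddCommGroup V] [Module ℝ V] [TopologicalSpace V]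

lemma chi_bound (ρ : Seminorm ℝ V) (g : V →L[ℝ] ℝ) (h : chi ρ g < ⊤) (v : V) :
    |g v| ≤ (chi ρ g).toReal * ρ v := by
  have key : ∀ u : V, ρ u ≤ 1 → |g u| ≤ (chi ρ g).toReal := by
    intro u hu
    have h1 : ENNReal.ofReal |g u| ≤ chi ρ g := by
      unfold chi
      exact le_iSup₂ (f := fun (v : V) (_ : v ∈ {v : V | ρ v ≤ 1}) => ENNReal.ofReal |g v|) u hu
    exact (ENNReal.ofReal_le_iff_le_toReal h.ne).1 h1
  have hK : 0 ≤ (chi ρ g).toReal := ENNReal.toReal_nonneg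
  have hρ : 0 ≤ ρ v := apply_nonneg ρ v
  -- scaling
  have sc : ∀ t : ℝ, ρ v < t → |g v| ≤ (chi ρ g).toReal * t := by
    intro t ht
    have htp : 0 < t := lt_of_le_of_lt hρ ht
    have h2 := key (t⁻¹ • v) (by
      rw [map_smul_eq_mul, Real.norm_eq_abs, abs_of_pos (inv_pos.2 htp), inv_mul_le_iff₀ htp]
      linarith)
    rw [map_smul, smul_eq_mul, abs_mul, abs_of_pos (inv_pos.2 htp), inv_mul_le_iff₀ htp] at h2
    linarith
  refine le_of_forall_pos_le_add fun ε hε => ?_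
  have h3 := sc (ρ v + ε / ((chi ρ g).toReal + 1)) (by
    have : 0 < ε / ((chi ρ g).toReal + 1) := by positivity
    linarith)
  have h4 : (chi ρ g).toReal * (ε / ((chi ρ g).toReal + 1)) ≤ ε := by
    rw [mul_div_assoc', div_le_iff₀ (by positivity)]
    nlinarith
  linarith

lemma chi_le (ρ : V → ℝ) (g : V →L[ℝ] ℝ) (K : ℝ) (hK : 0 ≤ K) (h : ∀ v, |g v| ≤ K * ρ v) :
    chi ρ g ≤ ENNReal.ofReal K := by
  unfold chi
  refine iSup₂_le fun v hv => ENNReal.ofReal_le_ofReal ?_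
  have : ρ v ≤ 1 := hv
  nlinarith [h v]

lemma chiSub_bound (Y : Submodule ℝ V) (ρ : Seminorm ℝ V) (f : Y →L[ℝ] ℝ)
    (h : chiSub Y ρ f < ⊤) (v : Y) : |f v| ≤ (chiSub Y ρ f).toReal * ρ v :=
  chi_bound (ρ.comp Y.subtype) f h v

lemma isHBE_iff (Y : Submodule ℝ V) (ρ : Seminorm ℝ V) (f : Y →L[ℝ] ℝ) (g : V →L[ℝ] ℝ)
    (h : chiSub Y ρ f < ⊤) : IsHBE Y ρ f g ↔
      (∀ y : Y, g y = f y) ∧ ∀ v, |g v| ≤ (chiSub Y ρ f).toReal * ρ v := by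
  constructor
  · rintro ⟨h1, h2⟩
    refine ⟨fun y => by rw [← h1]; rfl, fun v => ?_⟩
    rw [← h2]
    exact chi_bound ρ g (h2 ▸ h) v
  · rintro ⟨h1, h2⟩
    refine ⟨by ext y; exact h1 y, le_antisymm ?_ ?_⟩
    · have := chi_le ρ g _ ENNReal.toReal_nonneg h2
      rwa [ENNReal.ofReal_toReal h.ne] at this
    · unfold chiSub chi
      refine iSup₂_le fun v hv => ?_
      rw [← h1 v]
      exact le_iSup₂ (f := fun (v : V) (_ : v ∈ {v : V | ρ v ≤ 1}) => ENNReal.ofReal |g v|)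
        (v : V) hv

lemma clm_of_bound [IsTopologicalAddGroup V] (ρ : Seminorm ℝ V) (hρ : Continuous ρ) (K : ℝ)
    (hK : 0 ≤ K) (g : V →ₗ[ℝ] ℝ) (h : ∀ v, g v ≤ K * ρ v) :
    ∃ G : V →L[ℝ] ℝ, (∀ v, G v = g v) ∧ ∀ v, |G v| ≤ K * ρ v := by
  have habs : ∀ v, |g v| ≤ K * ρ v := by
    intro v
    refine abs_le.2 ⟨?_, h v⟩
    have := h (-v)
    rw [map_neg, map_neg_eq_map] at this
    linarith
  have hc : Continuous g := by
    refine continuous_of_continuousAt_zero g ?_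
    unfold ContinuousAt
    rw [map_zero]
    refine squeeze_zero_norm (a := fun v => K * ρ v) habs ?_
    have : Continuous fun v => K * ρ v := continuous_const.mul hρ
    have := this.tendsto 0
    simpa using this
  exact ⟨⟨g, hc⟩, fun v => rfl, habs⟩

lemma exists_HBE [IsTopologicalAddGroup V] (Y : Submodule ℝ V) (ρ : Seminorm ℝ V)
    (hρ : Continuous ρ) (f : Y →L[ℝ] ℝ) (h : chiSub Y ρ f < ⊤) :
    ∃ g : V →L[ℝ] ℝ, IsHBE Y ρ f g := by
  have hK : 0 ≤ (chiSub Y ρ f).toReal := ENNReal.toReal_nonneg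
  have hb := chiSub_bound Y ρ f h
  obtain ⟨g, hg1, hg2⟩ := exists_extension_of_le_sublinear ⟨Y, f.toLinearMap⟩
    (fun v => (chiSub Y ρ f).toReal * ρ v)
    (fun c hc x => by
      simp only [map_smul_eq_mul, Real.norm_eq_abs, abs_of_pos hc]; ring)
    (fun x y => by
      rw [← mul_add]; exact mul_le_mul_of_nonneg_left (map_add_le_add ρ x y) hK)
    (fun y => (le_abs_self _).trans (hb y))
  obtain ⟨G, hG1, hG2⟩ := clm_of_bound ρ hρ _ hK g hg2
  exact ⟨G, (isHBE_iff Y ρ f G h).2 ⟨fun y => (hG1 y).trans (hg1 y), hG2⟩⟩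

lemma exists_HBE_val [IsTopologicalAddGroup V] (Y : Submodule ℝ V) (ρ : Seminorm ℝ V)
    (hρ : Continuous ρ) (f : Y →L[ℝ] ℝ) (h : chiSub Y ρ f < ⊤) (x : V) (hx : x ∉ Y) (c : ℝ)
    (h1 : ∀ v : Y, f v - (chiSub Y ρ f).toReal * ρ ((v : V) + x) ≤ c)
    (h2 : ∀ w : Y, c ≤ -(f w) + (chiSub Y ρ f).toReal * ρ ((w : V) - x)) :
    ∃ g : V →L[ℝ] ℝ, IsHBE Y ρ f g ∧ g x = -c := by
  have hK : 0 ≤ (chiSub Y ρ f).toReal := ENNReal.toReal_nonneg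
  have hb := chiSub_bound Y ρ f h
  set K := (chiSub Y ρ f).toReal with hKdef
  let F : V →ₗ.[ℝ] ℝ := ⟨Y, f.toLinearMap⟩
  obtain ⟨g, hg1, hg2⟩ := exists_extension_of_le_sublinear (F.supSpanSingleton x (-c) hx)
    (fun v => K * ρ v)
    (fun c hc x => by
      simp only [map_smul_eq_mul, Real.norm_eq_abs, abs_of_pos hc]; ring)
    (fun x y => by
      rw [← mul_add]; exact mul_le_mul_of_nonneg_left (map_add_le_add ρ x y) hK)
    (by
      rintro ⟨z, hz⟩
      obtain ⟨y, hy, z', hz', rfl⟩ := Submodule.mem_sup.1 hz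
      obtain ⟨t, rfl⟩ := Submodule.mem_span_singleton.1 hz'
      rw [LinearPMap.supSpanSingleton_apply_mk F x (-c) hx y hy t]
      change f ⟨y, hy⟩ + t * (-c) ≤ K * ρ (y + t • x)
      rcases lt_trichotomy t 0 with ht | ht | ht
      · have h3 := h2 ((-t)⁻¹ • ⟨y, hy⟩)
        have e : y + t • x = (-t) • ((-t)⁻¹ • y - x) := by
          rw [smul_sub, smul_inv_smul₀ (by linarith)]
          simp
        have hs : 0 < -t := by linarith
        rw [e, map_smul_eq_mul, Real.norm_eq_abs, abs_of_pos hs]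
        rw [map_smul, smul_eq_mul] at h3
        have h4 := mul_le_mul_of_nonneg_left h3 hs.le
        have h5 : -t * ((-t)⁻¹ * f ⟨y, hy⟩) = f ⟨y, hy⟩ := mul_inv_cancel_left₀ hs.ne' _
        change -t * c ≤ -t * (-((-t)⁻¹ * f ⟨y, hy⟩) + K * ρ ((-t)⁻¹ • y - x)) at h4
        linear_combination h4 - h5
      · subst ht
        simpa using (le_abs_self _).trans (hb ⟨y, hy⟩)
      · have h3 := h1 (t⁻¹ • ⟨y, hy⟩)
        have e : y + t • x = t • (t⁻¹ • y + x) := by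
          rw [smul_add, smul_inv_smul₀ ht.ne']
        rw [e, map_smul_eq_mul, Real.norm_eq_abs, abs_of_pos ht]
        rw [map_smul, smul_eq_mul] at h3
        have h4 := mul_le_mul_of_nonneg_left h3 ht.le
        have h5 : t * (t⁻¹ * f ⟨y, hy⟩) = f ⟨y, hy⟩ := mul_inv_cancel_left₀ ht.ne' _
        change t * (t⁻¹ * f ⟨y, hy⟩ - K * ρ (t⁻¹ • y + x)) ≤ t * c at h4
        linear_combination h4 - h5)
  obtain ⟨G, hG1, hG2⟩ := clm_of_bound ρ hρ _ hK g hg2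
  refine ⟨G, (isHBE_iff Y ρ f G h).2 ⟨fun y => ?_, hG2⟩, ?_⟩
  · rw [hG1]
    exact (hg1 ⟨y, Submodule.mem_sup_left y.2⟩).trans
      (LinearPMap.supSpanSingleton_apply_mk_of_mem F (-c) hx y.2)
  · rw [hG1]
    exact (hg1 ⟨x, Submodule.mem_sup_right <| Submodule.mem_span_singleton_self _⟩).trans
      (LinearPMap.supSpanSingleton_apply_self F (-c) hx)

lemma cross (Y : Submodule ℝ V) (ρ : Seminorm ℝ V) (f : Y →L[ℝ] ℝ) (h : chiSub Y ρ f < ⊤)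
    (x : V) (v w : Y) :
    f v - (chiSub Y ρ f).toReal * ρ ((v : V) + x) ≤
      -(f w) + (chiSub Y ρ f).toReal * ρ ((w : V) - x) := by
  have hK : 0 ≤ (chiSub Y ρ f).toReal := ENNReal.toReal_nonneg
  have h1 := (le_abs_self _).trans (chiSub_bound Y ρ f h (v + w))
  have h2 : ρ ((v + w : Y) : V) ≤ ρ ((v : V) + x) + ρ ((w : V) - x) := by
    have := map_add_le_add ρ ((v : V) + x) ((w : V) - x)
    have e : ((v : V) + x) + ((w : V) - x) = ((v + w : Y) : V) := by
      rw [Submodule.coe_add]; abel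
    rwa [e] at this
  have h3 := mul_le_mul_of_nonneg_left h2 hK
  rw [map_add] at h1
  linarith

lemma bddA (Y : Submodule ℝ V) (ρ : Seminorm ℝ V) (f : Y →L[ℝ] ℝ) (h : chiSub Y ρ f < ⊤)
    (x : V) : BddAbove (Set.range fun v : Y =>
      f v - (chiSub Y ρ f).toReal * ρ ((v : V) + x)) :=
  ⟨_, by rintro _ ⟨v, rfl⟩; exact cross Y ρ f h x v 0⟩

lemma bddB (Y : Submodule ℝ V) (ρ : Seminorm ℝ V) (f : Y →L[ℝ] ℝ) (h : chiSub Y ρ f < ⊤)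
    (x : V) : BddBelow (Set.range fun w : Y =>
      -(f w) + (chiSub Y ρ f).toReal * ρ ((w : V) - x)) :=
  ⟨_, by rintro _ ⟨v, rfl⟩; exact cross Y ρ f h x 0 v⟩

lemma HBE_between (Y : Submodule ℝ V) (ρ : Seminorm ℝ V) (f : Y →L[ℝ] ℝ)
    (h : chiSub Y ρ f < ⊤) (x : V) (g : V →L[ℝ] ℝ) (hg : IsHBE Y ρ f g) :
    (⨆ v : Y, (f v - (chiSub Y ρ f).toReal * ρ ((v : V) + x))) ≤ - g x ∧
    - g x ≤ ⨅ w : Y, (-(f w) + (chiSub Y ρ f).toReal * ρ ((w : V) - x)) := by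
  obtain ⟨h1, h2⟩ := (isHBE_iff Y ρ f g h).1 hg
  constructor
  · refine ciSup_le fun v => ?_
    have := (le_abs_self _).trans (h2 (v + x))
    rw [map_add, h1] at this
    have h3 := (neg_le_abs _).trans (h2 (v + x))
    rw [map_add, h1] at h3
    have h4 := (le_abs_self _).trans (h2 (v + x))
    linarith
  · refine le_ciInf fun v => ?_
    have h3 := (le_abs_self _).trans (h2 (v - x))
    rw [map_sub, h1] at h3
    linarith

lemma exists_fin {ι : Type*} [Nonempty ι] (p : SeminormFamily ℝ V ι) (hp : WithSeminorms p)
    (hdir : Directed (· ≤ ·) p) (Y : Submodule ℝ V) (f : Y →L[ℝ] ℝ) :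
    ∃ i, chiSub Y (p i) f < ⊤ := by
  have hY : WithSeminorms (p.comp Y.subtype) :=
    Topology.IsInducing.withSeminorms hp (f := Y.subtype) Topology.IsInducing.subtypeVal
  let q : Seminorm ℝ Y := (normSeminorm ℝ ℝ).comp f.toLinearMap
  have hq : Continuous q := continuous_norm.comp f.continuous
  obtain ⟨s, C, -, hC⟩ := Seminorm.bound_of_continuous hY q hq
  obtain ⟨i, hi⟩ := hdir.finset_le s
  refine ⟨i, lt_of_le_of_lt (chi_le _ f C C.2 fun v => ?_) ENNReal.ofReal_lt_top⟩
  have h1 : |f v| ≤ C * (s.sup (p.comp Y.subtype)) v := hC v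
  have h2 : s.sup (p.comp Y.subtype) ≤ (p i).comp Y.subtype :=
    Finset.sup_le fun j hj y => hi j hj y
  exact h1.trans (mul_le_mul_of_nonneg_left (h2 v) C.2)

end helpers

theorem statement0 {X : Type*} [AddCommGroup X] [Module ℝ X] [TopologicalSpace X]
    {ι : Type*} [Nonempty ι] (p : SeminormFamily ℝ X ι) (hp : WithSeminorms p)
    (hdir : Directed (· ≤ ·) p) (Y : Submodule ℝ X) :
    USNP (fun i => ⇑(p i)) Y ↔
      ∀ (f : Y →L[ℝ] ℝ) (x : X), x ∉ Y →
        ∀ i j : ι, chiSub Y (⇑(p i)) f < ⊤ → chiSub Y (⇑(p j)) f < ⊤ →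
          (⨆ v : Y, (f v - (chiSub Y (⇑(p i)) f).toReal * p i ((v : X) + x))) =
            (⨅ w : Y, (-(f w) + (chiSub Y (⇑(p j)) f).toReal * p j ((w : X) - x))) := by
  haveI := hp.topologicalAddGroup
  constructor
  · intro H f x hx i j hi hj
    obtain ⟨ft, hft⟩ := H f
    obtain ⟨g, hg, hgx⟩ := exists_HBE_val Y (p i) (hp.continuous_seminorm i) f hi x hx _
      (fun v => le_ciSup (bddA Y (p i) f hi x) v)
      (fun w => ciSup_le fun v => cross Y (p i) f hi x v w)
    obtain ⟨g', hg', hgx'⟩ := exists_HBE_val Y (p j) (hp.continuous_seminorm j) f hj x hx _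
      (fun v => le_ciInf fun w => cross Y (p j) f hj x v w)
      (fun w => ciInf_le (bddB Y (p j) f hj x) w)
    rw [(hft i hi).2 g hg] at hgx
    rw [(hft j hj).2 g' hg'] at hgx'
    linarith
  · intro H f
    obtain ⟨i, hi⟩ := exists_fin p hp hdir Y f
    obtain ⟨ft, hft⟩ := exists_HBE Y (p i) (hp.continuous_seminorm i) f hi
    have uniq : ∀ j, chiSub Y (p j) f < ⊤ → ∀ g : X →L[ℝ] ℝ, IsHBE Y (p j) f g → g = ft := by
      intro j hj g hg
      ext x
      by_cases hx : x ∈ Y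
      · exact (((isHBE_iff Y (p j) f g hj).1 hg).1 ⟨x, hx⟩).trans
          (((isHBE_iff Y (p i) f ft hi).1 hft).1 ⟨x, hx⟩).symm
      · have a := HBE_between Y (p j) f hj x g hg
        have b := HBE_between Y (p i) f hi x ft hft
        have c1 := H f x hx i j hi hj
        have c2 := H f x hx j i hj hi
        linarith [a.1, a.2, b.1, b.2]
    refine ⟨ft, fun j hj => ⟨?_, uniq j hj⟩⟩
    obtain ⟨g, hg⟩ := exists_HBE Y (p j) (hp.continuous_seminorm j) f hj
    rwa [← uniq j hj g hg]
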